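/- Let x be an eigenvector of Q(U) for the least eigenvalue, where U is the unicyclic graph obtained from an odd cycle C_g with vertices v₁,…,v_g (labeled cyclically) by attaching a path at v_g ending in a star. Then x(v_i) = x(v_{g−i}) for i = 1, …, (g−1)/2. -/

import Mathlib

open SimpleGraph Matrix

open Classical in
/-- The signless Laplacian matrix `Q(G) = D(G) + A(G)` of a simple graph. -/
noncomputable def signlessLaplacian {V : Type*} [Fintype V] (G : SimpleGraph V) : Matrix V V ℝ :=
  G.degMatrix ℝ + G.adjMatrix ℝ

open Classical in
/-- The least eigenvalue of the signless Laplacian. -/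
noncomputable def qmin {V : Type*} [Fintype V] (G : SimpleGraph V) : ℝ :=
  sInf (spectrum ℝ (signlessLaplacian G))

/-- The unicyclic graph `U_n^k(g)` on `Fin n`: an odd cycle on vertices `0, …, g-1`
(vertex `i-1` playing the role of `vᵢ`), a pendant path `g-1, g, …, n-k-1` attached at
`v_g = g-1`, and a star with center `n-k-1` and leaves `n-k, …, n-1`. -/
def Ugraph (n k g : ℕ) : SimpleGraph (Fin n) :=
  SimpleGraph.fromRel (fun a b =>
    (b.1 = a.1 + 1 ∧ a.1 + 2 ≤ n - k) ∨ (a.1 = 0 ∧ b.1 = g - 1) ∨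
      (a.1 = n - k - 1 ∧ n - k ≤ b.1))

/-!
The difference `y` of a least eigenvector and its mirror image again solves the eigenvalue equation,
and it vanishes at `v_g` and off the cycle. If it is nonzero at some cycle vertex, rotate the cycle
so that this value lands on `v_g`, and continue it with alternating signs along the pendant tree.
No edge outside the cycle contributes to the quadratic form `∑ (y a + y b) ^ 2`, so the value of the
form is the same as for `y`, but the norm has strictly increased. By the Rayleigh bound the least
eigenvalue is then at most `0`, so `y a + y b = 0` on every edge, and `y` vanishes by connectedness.

Of the cycle only vertex-transitivity matters, and of the tree only that it is bipartite.
-/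

open scoped MatrixOrder in
theorem sInf_spectrum_mul_dotProduct_self_le {V : Type*} [Fintype V] [DecidableEq V]
    {A : Matrix V V ℝ} (hA : A.IsHermitian) (x : V → ℝ) :
    sInf (spectrum ℝ A) * (x ⬝ᵥ x) ≤ x ⬝ᵥ A *ᵥ x := by
  have hle : algebraMap ℝ _ (sInf (spectrum ℝ A)) ≤ A :=
    (algebraMap_le_iff_le_spectrum hA).2 fun _ hx ↦ csInf_le finite_real_spectrum.bddBelow hx
  have hnonneg := (Matrix.le_iff.1 hle).dotProduct_mulVec_nonneg x
  simpa only [star_trivial, sub_mulVec, dotProduct_sub, Algebra.algebraMap_eq_smul_one,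
    smul_mulVec, one_mulVec, dotProduct_smul, smul_eq_mul, sub_nonneg] using hnonneg

section SignlessLaplacian

variable {V W : Type*} [Fintype V] [Fintype W]

open Classical in
theorem signlessLaplacian_mulVec_apply (G : SimpleGraph V) (x : V → ℝ) (a : V) :
    (signlessLaplacian G *ᵥ x) a = ∑ b, if G.Adj a b then x a + x b else 0 := by
  rw [signlessLaplacian, add_mulVec, Pi.add_apply, degMatrix_mulVec_apply,
    adjMatrix_mulVec_apply, ← card_neighborFinset_eq_degree, ← Finset.sum_filter,
    Finset.sum_add_distrib, Finset.sum_const, nsmul_eq_mul, neighborFinset_eq_filter]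

open Classical in
theorem dotProduct_signlessLaplacian_mulVec (G : SimpleGraph V) (x : V → ℝ) :
    x ⬝ᵥ signlessLaplacian G *ᵥ x =
      (∑ a, ∑ b, if G.Adj a b then (x a + x b) ^ 2 else 0) / 2 := by
  have hleft : x ⬝ᵥ signlessLaplacian G *ᵥ x =
      ∑ a, ∑ b, if G.Adj a b then x a * (x a + x b) else 0 := by
    simp only [dotProduct, signlessLaplacian_mulVec_apply, Finset.mul_sum, mul_ite, mul_zero]
  have hright : x ⬝ᵥ signlessLaplacian G *ᵥ x =
      ∑ a, ∑ b, if G.Adj a b then x b * (x a + x b) else 0 := by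
    rw [hleft, Finset.sum_comm]
    simp only [G.adj_comm, add_comm]
  rw [eq_div_iff two_ne_zero, mul_two]
  nth_rewrite 1 [hleft]
  rw [hright]
  simp only [← Finset.sum_add_distrib, ite_add_ite, add_zero, ← add_mul, sq]

theorem dotProduct_signlessLaplacian_mulVec_nonneg (G : SimpleGraph V) (x : V → ℝ) :
    0 ≤ x ⬝ᵥ signlessLaplacian G *ᵥ x := by
  rw [dotProduct_signlessLaplacian_mulVec]
  positivity

theorem dotProduct_signlessLaplacian_mulVec_eq_zero_iff {G : SimpleGraph V} {x : V → ℝ} :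
    x ⬝ᵥ signlessLaplacian G *ᵥ x = 0 ↔ ∀ a b, G.Adj a b → x a + x b = 0 := by
  simp (disch := intros; positivity)
    [dotProduct_signlessLaplacian_mulVec, Finset.sum_eq_zero_iff_of_nonneg]

theorem isHermitian_signlessLaplacian (G : SimpleGraph V) : (signlessLaplacian G).IsHermitian := by
  classical
  exact (G.isHermitian_degMatrix ℝ).add (G.isHermitian_adjMatrix ℝ)

theorem qmin_mul_dotProduct_self_le (G : SimpleGraph V) (x : V → ℝ) :
    qmin G * (x ⬝ᵥ x) ≤ x ⬝ᵥ signlessLaplacian G *ᵥ x := by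
  classical
  exact sInf_spectrum_mul_dotProduct_self_le (isHermitian_signlessLaplacian G) x

theorem signlessLaplacian_mulVec_comp_iso {G : SimpleGraph V} {H : SimpleGraph W} (φ : G ≃g H)
    (x : W → ℝ) : signlessLaplacian G *ᵥ (x ∘ φ) = (signlessLaplacian H *ᵥ x) ∘ φ := by
  classical
  ext a
  simp only [Function.comp_apply, signlessLaplacian_mulVec_apply, ← φ.map_adj_iff]
  exact φ.toEquiv.sum_comp fun b ↦ if H.Adj (φ a) b then x (φ a) + x b else 0

theorem add_eq_zero_of_adj_of_dotProduct_self_lt {G : SimpleGraph V} {y w : V → ℝ}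
    (hy : signlessLaplacian G *ᵥ y = qmin G • y)
    (henergy : w ⬝ᵥ signlessLaplacian G *ᵥ w ≤ y ⬝ᵥ signlessLaplacian G *ᵥ y)
    (hnorm : y ⬝ᵥ y < w ⬝ᵥ w) {a b : V} (hab : G.Adj a b) : y a + y b = 0 := by
  have hyy : y ⬝ᵥ signlessLaplacian G *ᵥ y = qmin G * (y ⬝ᵥ y) := by
    rw [hy, dotProduct_smul, smul_eq_mul]
  have hle : qmin G * (w ⬝ᵥ w) ≤ qmin G * (y ⬝ᵥ y) :=
    (qmin_mul_dotProduct_self_le G w).trans (henergy.trans_eq hyy)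
  have hqmin : qmin G ≤ 0 := le_of_not_gt fun hpos ↦ (mul_lt_mul_of_pos_left hnorm hpos).not_ge hle
  have hyy_nonneg : 0 ≤ y ⬝ᵥ y := dotProduct_self_star_nonneg y
  have hyy_nonpos : y ⬝ᵥ signlessLaplacian G *ᵥ y ≤ 0 :=
    hyy.trans_le (mul_nonpos_of_nonpos_of_nonneg hqmin hyy_nonneg)
  exact dotProduct_signlessLaplacian_mulVec_eq_zero_iff.1
    (hyy_nonpos.antisymm (dotProduct_signlessLaplacian_mulVec_nonneg G y)) a b hab

end SignlessLaplacian

section Restriction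

variable {V : Type*} [Fintype V] {C : Set V} [Fintype C]

theorem dotProduct_self_comp_val_of_eq_zero {y : V → ℝ} (hy : ∀ v ∉ C, y v = 0) :
    (fun c : C ↦ y c) ⬝ᵥ (fun c : C ↦ y c) = y ⬝ᵥ y := by
  simp only [dotProduct]
  rw [Finset.sum_set_coe C (f := fun v ↦ y v * y v)]
  refine Finset.sum_subset (Finset.subset_univ _) fun v _ hv ↦ ?_
  rw [hy v (by simpa using hv), mul_zero]

theorem dotProduct_self_comp_val_lt {w : V → ℝ} {v : V} (hv : v ∉ C) (hwv : w v ≠ 0) :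
    (fun c : C ↦ w c) ⬝ᵥ (fun c : C ↦ w c) < w ⬝ᵥ w := by
  simp only [dotProduct]
  rw [Finset.sum_set_coe C (f := fun v ↦ w v * w v)]
  exact Finset.sum_lt_sum_of_subset (Finset.subset_univ _) (Finset.mem_univ v) (by simpa using hv)
    (mul_self_pos.2 hwv) fun _ _ _ ↦ mul_self_nonneg _

theorem dotProduct_signlessLaplacian_induce_mulVec {G : SimpleGraph V} {w : V → ℝ}
    (hw : ∀ a b, G.Adj a b → b ∉ C → w a + w b = 0) :
    (fun c : C ↦ w c) ⬝ᵥ signlessLaplacian (G.induce C) *ᵥ (fun c : C ↦ w c) =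
      w ⬝ᵥ signlessLaplacian G *ᵥ w := by
  classical
  have hinner (a : V) : (∑ b : C, if G.Adj a b then (w a + w b) ^ 2 else 0) =
      ∑ b, if G.Adj a b then (w a + w b) ^ 2 else 0 := by
    rw [Finset.sum_set_coe C (f := fun b ↦ if G.Adj a b then (w a + w b) ^ 2 else 0)]
    refine Finset.sum_subset (Finset.subset_univ _) fun b _ hb ↦ ite_eq_right_iff.2 fun hab ↦ ?_
    rw [hw a b hab (by simpa using hb), zero_pow two_ne_zero]
  simp only [dotProduct_signlessLaplacian_mulVec, comap_adj, Function.Embedding.subtype_apply,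
    hinner]
  rw [Finset.sum_set_coe C (f := fun a ↦ ∑ b, if G.Adj a b then (w a + w b) ^ 2 else 0)]
  congr 1
  refine Finset.sum_subset (Finset.subset_univ _) fun a _ ha ↦
    Finset.sum_eq_zero fun b _ ↦ ite_eq_right_iff.2 fun hab ↦ ?_
  rw [add_comm, hw b a hab.symm (by simpa using ha), zero_pow two_ne_zero]

end Restriction

theorem eq_zero_of_preconnected_of_forall_adj_add_eq_zero {V : Type*} {G : SimpleGraph V}
    (hG : G.Preconnected) {y : V → ℝ} (hy : ∀ a b, G.Adj a b → y a + y b = 0) {r : V}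
    (hr : y r = 0) : y = 0 := by
  funext v
  obtain ⟨p⟩ := hG v r
  induction p with
  | nil => exact hr
  | cons hab _ ih =>
    have := hy _ _ hab
    rwa [ih hr, Pi.zero_apply, add_zero] at this

/-- `G` is obtained from the graph it induces on `C` by attaching a bipartite graph, whose vertices
are `r` and the vertices outside `C`, at the vertex `r` of `C`. -/
structure IsBipartiteExtension {V : Type*} (G : SimpleGraph V) (C : Set V) (r : V) : Prop where
  root_mem : r ∈ C
  eq_root_of_adj ⦃a b : V⦄ : G.Adj a b → a ∈ C → b ∉ C → a = r
  isBipartite : (G.induce (insert r Cᶜ)).IsBipartite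

namespace IsBipartiteExtension

variable {V : Type*} {G : SimpleGraph V} {C : Set V} {r : V}

theorem mem_insert_root_of_adj (h : IsBipartiteExtension G C r) {a b : V} (hab : G.Adj a b)
    (hb : b ∉ C) : a ∈ insert r Cᶜ :=
  or_iff_not_imp_right.2 fun ha ↦ h.eq_root_of_adj hab (not_not.1 ha) hb

theorem exists_sign (h : IsBipartiteExtension G C r) :
    ∃ ε : V → ℤˣ, ∀ a b, G.Adj a b → b ∉ C → ε a = -ε b := by
  classical
  let c : (G.induce (insert r Cᶜ)).Coloring ℤˣ := h.isBipartite.toColoring (by simp)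
  refine ⟨fun v ↦ if hv : v ∈ insert r Cᶜ then c ⟨v, hv⟩ else 1, fun a b hab hb ↦ ?_⟩
  have hbS : b ∈ insert r Cᶜ := Or.inr hb
  have haS : a ∈ insert r Cᶜ := h.mem_insert_root_of_adj hab hb
  have hne : c ⟨a, haS⟩ ≠ c ⟨b, hbS⟩ := c.valid hab
  simpa only [dif_pos haS, dif_pos hbS] using Int.units_ne_iff_eq_neg.1 hne

theorem exists_extend [Fintype V] [Fintype C] (h : IsBipartiteExtension G C r) (u : C → ℝ) :
    ∃ w : V → ℝ, (fun c : C ↦ w c) = u ∧ (∀ v ∉ C, |w v| = |u ⟨r, h.root_mem⟩|) ∧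
      w ⬝ᵥ signlessLaplacian G *ᵥ w = u ⬝ᵥ signlessLaplacian (G.induce C) *ᵥ u := by
  classical
  obtain ⟨ε, hε⟩ := h.exists_sign
  let w (v : V) : ℝ := if hv : v ∈ C then u ⟨v, hv⟩ else (ε r * ε v : ℤˣ) * u ⟨r, h.root_mem⟩
  have hwu : (fun c : C ↦ w c) = u := funext fun c ↦ dif_pos c.2
  have hw_off {v : V} (hv : v ∉ C) : w v = (ε r * ε v : ℤˣ) * u ⟨r, h.root_mem⟩ := dif_neg hv
  refine ⟨w, hwu, fun v hv ↦ ?_, ?_⟩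
  · rw [hw_off hv, abs_mul]
    rcases Int.units_eq_one_or (ε r * ε v) with hs | hs <;> simp [hs]
  · rw [← dotProduct_signlessLaplacian_induce_mulVec (C := C), hwu]
    intro a b hab hb
    have hwa : w a = (ε r * ε a : ℤˣ) * u ⟨r, h.root_mem⟩ := by
      obtain rfl | ha := h.mem_insert_root_of_adj hab hb
      · simp [w, h.root_mem]
      · exact hw_off ha
    rw [hwa, hw_off hb, hε a b hab hb]
    simp

theorem eq_zero_of_mulVec_eq_qmin_smul [Fintype V] (h : IsBipartiteExtension G C r)
    (hG : G.Preconnected) (hC : Cᶜ.Nonempty)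
    [MulAction.IsPretransitive (G.induce C ≃g G.induce C) C] {y : V → ℝ}
    (hy : signlessLaplacian G *ᵥ y = qmin G • y)
    (hy_off : ∀ v ∉ C, y v = 0) (hyr : y r = 0) : y = 0 := by
  classical
  obtain ⟨v, hv⟩ := hC
  by_contra hne
  obtain ⟨c, hyc⟩ := Function.ne_iff.1 hne
  have hc : c ∈ C := not_not.1 (mt (hy_off c) hyc)
  obtain ⟨φ, hφ⟩ := MulAction.exists_smul_eq (G.induce C ≃g G.induce C)
    (⟨r, h.root_mem⟩ : C) ⟨c, hc⟩
  let z (c : C) : ℝ := y c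
  obtain ⟨w, hwC, hw_off, hw_energy⟩ := h.exists_extend (z ∘ φ)
  have henergy : w ⬝ᵥ signlessLaplacian G *ᵥ w = y ⬝ᵥ signlessLaplacian G *ᵥ y := by
    rw [hw_energy, signlessLaplacian_mulVec_comp_iso,
      ← dotProduct_signlessLaplacian_induce_mulVec (C := C)]
    · exact φ.toEquiv.sum_comp fun c ↦ z c * (signlessLaplacian (G.induce C) *ᵥ z) c
    · intro a b hab hb
      have hya : y a = 0 := (h.mem_insert_root_of_adj hab hb).elim (· ▸ hyr) (hy_off a)
      rw [hya, hy_off b hb, add_zero]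
  have hwv : w v ≠ 0 := by
    rw [← abs_ne_zero, hw_off v hv, abs_ne_zero]
    simpa [z, ← RelIso.smul_def, hφ] using hyc
  have hnorm : y ⬝ᵥ y < w ⬝ᵥ w :=
    calc y ⬝ᵥ y = z ⬝ᵥ z := (dotProduct_self_comp_val_of_eq_zero hy_off).symm
      _ = (z ∘ φ) ⬝ᵥ (z ∘ φ) := (φ.toEquiv.sum_comp fun c ↦ z c * z c).symm
      _ < w ⬝ᵥ w := hwC ▸ dotProduct_self_comp_val_lt hv hwv
  exact hne <| eq_zero_of_preconnected_of_forall_adj_add_eq_zero hG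
    (fun _ _ ↦ add_eq_zero_of_adj_of_dotProduct_self_lt hy henergy.le hnorm) hyr

theorem comp_eq_self_of_mulVec_eq_qmin_smul [Fintype V] (h : IsBipartiteExtension G C r)
    (hG : G.Preconnected) (hC : Cᶜ.Nonempty)
    [MulAction.IsPretransitive (G.induce C ≃g G.induce C) C] {σ : G ≃g G}
    (hσ_off : ∀ v ∉ C, σ v = v) (hσr : σ r = r) {x : V → ℝ}
    (hx : signlessLaplacian G *ᵥ x = qmin G • x) : x ∘ σ = x := by
  have hdiff : signlessLaplacian G *ᵥ (x ∘ σ - x) = qmin G • (x ∘ σ - x) := by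
    rw [mulVec_sub, signlessLaplacian_mulVec_comp_iso, hx, smul_sub]
    rfl
  refine sub_eq_zero.1 (h.eq_zero_of_mulVec_eq_qmin_smul hG hC hdiff (fun v hv ↦ ?_) ?_)
  · simp [hσ_off v hv]
  · simp [hσr]

end IsBipartiteExtension

theorem isPretransitive_circulantGraph {A : Type*} [AddGroup A] (s : Set A) :
    MulAction.IsPretransitive (circulantGraph s ≃g circulantGraph s) A where
  exists_smul_eq a b :=
    ⟨⟨Equiv.addRight (-a + b), circulantGraph_adj_translate⟩, add_neg_cancel_left a b⟩

theorem isPretransitive_cycleGraph (n : ℕ) :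
    MulAction.IsPretransitive (cycleGraph n ≃g cycleGraph n) (Fin n) := by
  cases n with
  | zero => exact ⟨fun a ↦ a.elim0⟩
  | succ m =>
    rw [cycleGraph_eq_circulantGraph]
    exact isPretransitive_circulantGraph _

theorem cycleGraph_adj_iff_val {n : ℕ} {a b : Fin n} : (cycleGraph n).Adj a b ↔ a.1 ≠ b.1 ∧
    (b.1 = a.1 + 1 ∨ a.1 = b.1 + 1 ∨ (a.1 = 0 ∧ b.1 = n - 1) ∨ (b.1 = 0 ∧ a.1 = n - 1)) := by
  rw [cycleGraph_adj']
  rcases lt_trichotomy a b with hab | rfl | hab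
  · rw [Fin.coe_sub_iff_lt.2 hab, Fin.sub_val_of_le hab.le]
    omega
  · simp [Fin.val_sub]
  · rw [Fin.coe_sub_iff_lt.2 hab, Fin.sub_val_of_le hab.le]
    omega

theorem isPretransitive_of_iso {V W : Type*} {G : SimpleGraph V} {H : SimpleGraph W} (e : G ≃g H)
    [MulAction.IsPretransitive (H ≃g H) W] : MulAction.IsPretransitive (G ≃g G) V where
  exists_smul_eq a b := by
    obtain ⟨φ, hφ⟩ := MulAction.exists_smul_eq (H ≃g H) (e a) (e b)
    exact ⟨(e.trans φ).trans e.symm, e.symm_apply_eq.2 hφ⟩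

namespace Ugraph

variable {n k g : ℕ}

theorem adj_iff {a b : Fin n} : (Ugraph n k g).Adj a b ↔ a.1 ≠ b.1 ∧
    (((b.1 = a.1 + 1 ∧ a.1 + 2 ≤ n - k) ∨ (a.1 = 0 ∧ b.1 = g - 1) ∨
      (a.1 = n - k - 1 ∧ n - k ≤ b.1)) ∨
    ((a.1 = b.1 + 1 ∧ b.1 + 2 ≤ n - k) ∨ (b.1 = 0 ∧ a.1 = g - 1) ∨
      (b.1 = n - k - 1 ∧ n - k ≤ a.1))) := by
  simp only [Ugraph, fromRel_adj, ne_eq, Fin.ext_iff]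

/-- The vertices `v₁, …, v_g` of the cycle of `Ugraph n k g`. -/
def cycleVertices (n g : ℕ) : Set (Fin n) := {v | v.1 < g}

/-- The cycle of `Ugraph n k g`, with its vertices in their order along the cycle. -/
def induceCycleVerticesIso (hkg : g + k ≤ n) :
    (Ugraph n k g).induce (cycleVertices n g) ≃g cycleGraph g where
  toFun v := ⟨v.1.1, v.2⟩
  invFun i := ⟨⟨i.1, by omega⟩, i.2⟩
  left_inv _ := rfl
  right_inv _ := rfl
  map_rel_iff' {a b} := by
    obtain ⟨⟨a, han⟩, hag : a < g⟩ := a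
    obtain ⟨⟨b, hbn⟩, hbg : b < g⟩ := b
    simp only [Equiv.coe_fn_mk, cycleGraph_adj_iff_val, comap_adj, Function.Embedding.subtype_apply,
      adj_iff]
    omega

theorem isPretransitive_induce_cycleVertices (hkg : g + k ≤ n) :
    MulAction.IsPretransitive ((Ugraph n k g).induce (cycleVertices n g) ≃g
      (Ugraph n k g).induce (cycleVertices n g)) (cycleVertices n g) :=
  have := isPretransitive_cycleGraph g
  isPretransitive_of_iso (induceCycleVerticesIso hkg)

theorem isBipartiteExtension (hg : 0 < g) (hkg : g + k ≤ n) :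
    IsBipartiteExtension (Ugraph n k g) (cycleVertices n g) ⟨g - 1, by omega⟩ where
  root_mem := Nat.sub_one_lt_of_lt hg
  eq_root_of_adj a b hab ha hb := by
    simp only [adj_iff, cycleVertices, Set.mem_ofPred_eq, Fin.ext_iff] at *
    omega
  isBipartite := by
    have hmem {v : Fin n} (hv : v ∈ insert (⟨g - 1, by omega⟩ : Fin n) (cycleVertices n g)ᶜ) :
        g - 1 ≤ v.1 := by
      simp only [cycleVertices, Set.mem_insert_iff, Set.mem_compl_iff, Set.mem_ofPred_eq,
        Fin.ext_iff] at hv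
      omega
    -- Colour by the index modulo `2`, giving all leaves of the star the index `n - k`.
    refine ⟨Coloring.mk (fun v ↦ ⟨min v.1.1 (n - k) % 2, by omega⟩) ?_⟩
    rintro ⟨a, ha⟩ ⟨b, hb⟩ hab
    have ha := hmem ha
    have hb := hmem hb
    simp only [comap_adj, Function.Embedding.subtype_apply, adj_iff] at hab
    simp only [ne_eq, Fin.ext_iff]
    omega

theorem preconnected (hg : 0 < g) (hkg : g + k ≤ n) : (Ugraph n k g).Preconnected := by
  have hroot (v : ℕ) (hv : v < n) : (Ugraph n k g).Reachable ⟨v, hv⟩ ⟨0, by omega⟩ := by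
    induction v using Nat.strong_induction_on with
    | _ v ih =>
      rcases Nat.eq_zero_or_pos v with rfl | hpos
      · rfl
      · have hadj : (Ugraph n k g).Adj ⟨v, hv⟩ ⟨min (v - 1) (n - k - 1), by omega⟩ := by
          simp only [adj_iff]
          omega
        exact hadj.reachable.trans (ih _ (by omega) _)
  exact fun a b ↦ (hroot a a.2).trans (hroot b b.2).symm

/-- The involution of the vertices of `Ugraph n k g` that swaps `vᵢ` and `v_{g-i}` for `0 < i < g`
and fixes every other vertex. -/
def reflectionFun (hgn : g ≤ n) (v : Fin n) : Fin n :=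
  ⟨if v.1 < g - 1 then g - 2 - v.1 else v.1, by split_ifs <;> omega⟩

theorem involutive_reflectionFun (hgn : g ≤ n) :
    Function.Involutive (reflectionFun hgn) := fun v ↦ by
  ext
  simp only [reflectionFun]
  split_ifs <;> omega

theorem adj_reflectionFun (hgn : g ≤ n) (hkg : g + k ≤ n) {a b : Fin n}
    (hab : (Ugraph n k g).Adj a b) :
    (Ugraph n k g).Adj (reflectionFun hgn a) (reflectionFun hgn b) := by
  simp only [adj_iff, reflectionFun] at hab ⊢
  split_ifs <;> omega

/-- The reflection of `Ugraph n k g` through the cycle vertex `v_g`, as an automorphism. -/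
def reflection (hkg : g + k ≤ n) : Ugraph n k g ≃g Ugraph n k g where
  toEquiv := (involutive_reflectionFun (le_of_add_le_left hkg)).toPerm
  map_rel_iff' {a b} := by
    have hgn : g ≤ n := le_of_add_le_left hkg
    refine ⟨fun hab ↦ ?_, adj_reflectionFun hgn hkg⟩
    simpa only [Function.Involutive.coe_toPerm, involutive_reflectionFun hgn _] using
      adj_reflectionFun hgn hkg hab

theorem reflection_apply_of_lt (hkg : g + k ≤ n) {i : ℕ} (hi1 : 1 ≤ i) (hi2 : i < g) :
    reflection hkg ⟨i - 1, by omega⟩ = ⟨g - i - 1, by omega⟩ := by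
  have hlt : i - 1 < g - 1 := by omega
  refine Fin.ext ((if_pos hlt).trans ?_)
  dsimp only
  omega

theorem reflection_apply_of_le (hkg : g + k ≤ n) {v : Fin n} (hv : g - 1 ≤ v.1) :
    reflection hkg v = v :=
  Fin.ext (if_neg hv.not_gt)

end Ugraph

theorem first_eigenvector_symmetry_general (n k g : ℕ) (hgn : g < n) (hkg : g + k ≤ n)
    (x : Fin n → ℝ)
    (hx : (signlessLaplacian (Ugraph n k g)).mulVec x = qmin (Ugraph n k g) • x)
    (i : ℕ) (hi1 : 1 ≤ i) (hi2 : i < g) :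
    x ⟨i - 1, by omega⟩ = x ⟨g - i - 1, by omega⟩ := by
  have hg : 0 < g := by omega
  have := Ugraph.isPretransitive_induce_cycleVertices hkg
  have hoff : (Ugraph.cycleVertices n g)ᶜ.Nonempty := ⟨⟨g, hgn⟩, lt_irrefl g⟩
  have hsymm : x ∘ Ugraph.reflection hkg = x :=
    (Ugraph.isBipartiteExtension hg hkg).comp_eq_self_of_mulVec_eq_qmin_smul
      (Ugraph.preconnected hg hkg) hoff
      (fun v hv ↦ Ugraph.reflection_apply_of_le hkg ((Nat.sub_le g 1).trans (not_lt.1 hv)))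
      (Ugraph.reflection_apply_of_le hkg le_rfl) hx
  rw [← Ugraph.reflection_apply_of_lt hkg hi1 hi2]
  exact (congrFun hsymm _).symm

theorem first_eigenvector_symmetry (n k g : ℕ) (hg3 : 3 ≤ g) (hodd : Odd g)
    (hgn : g < n) (hk : 1 ≤ k) (hkg : g + k ≤ n)
    (x : Fin n → ℝ) (hx0 : x ≠ 0)
    (hx : (signlessLaplacian (Ugraph n k g)).mulVec x = qmin (Ugraph n k g) • x)
    (i : ℕ) (hi1 : 1 ≤ i) (hi2 : i ≤ (g - 1) / 2) :
    x ⟨i - 1, by omega⟩ = x ⟨g - i - 1, by omega⟩ :=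
  first_eigenvector_symmetry_general n k g hgn hkg x hx i hi1 (by omega)
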